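/- For every positive integer n, the number of pairs (x, y) ∈ ℤ² with x² + xy + 2y² = n, x ≡ 1 (mod 2), and y ≡ 0 (mod 2) equals 2 ∑_{d|n} χ₋₇(d) − 4 ∑_{d|(n/2)} χ₋₇(d) + 2 ∑_{d|(n/4)} χ₋₇(d). -/

import Mathlib

/-
The form `x² + xy + 2y²` is the norm form of `ℤ[ω]`, `ω² = ω - 2`, and it takes an odd value exactly
when `x` is odd and `y` is even. So for odd `n` all representations count and the last two divisor
sums vanish, while for even `n` there is nothing to count and the right-hand side vanishes because
`χ₋₇(2) = 1`.

`ℤ[ω]` is norm-Euclidean with units `±1`, so it remains to count elements of norm `n` in a quadratic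
order where divisors decompose. Let `r(n)` be their number and let `χ` be the quadratic character of
the order. According as the prime `p` is ramified, split or inert, a factor of norm `p` (or `p`
itself) divides the elements of norm `pm`, and in all cases
`r(pm) + χ(p) r(m/p) = (1 + χ(p)) r(m)`, where `r(m/p) = 0` unless `p ∣ m`. The divisor sum
`∑_{d ∣ n} χ(d)` satisfies the same recursion, so the two are proportional, with ratio `r(1)`.
-/

open Finset

/-- The Kronecker symbol `(-7/d)` for positive `d`. -/
def chiM7 (d : ℕ) : ℤ :=
  if d % 7 = 1 ∨ d % 7 = 2 ∨ d % 7 = 4 then 1 else if d % 7 = 0 then 0 else -1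

/-- `Sdiv χ n k = ∑_{d ∣ n/k} χ d`, interpreted as `0` when `k` does not divide `n`. -/
def Sdiv (χ : ℕ → ℤ) (n k : ℕ) : ℤ := if k ∣ n then ∑ d ∈ (n / k).divisors, χ d else 0

theorem sum_divisors_filter_dvd {R : Type*} [Semiring R] (χ : ℕ →* R) (k n : ℕ) :
    ∑ d ∈ n.divisors with k ∣ d, χ d =
      χ k * if k ∣ n then ∑ d ∈ (n / k).divisors, χ d else 0 := by
  rcases eq_or_ne n 0 with rfl | hn
  · simp
  split_ifs with hkn
  · obtain ⟨m, rfl⟩ := hkn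
    have hk : k ≠ 0 := left_ne_zero_of_mul hn
    have hfilter : {d ∈ (k * m).divisors | k ∣ d} = m.divisors.image (k * ·) := by
      ext d
      simp only [mem_filter, Nat.mem_divisors, mem_image]
      constructor
      · rintro ⟨⟨hd, -⟩, e, rfl⟩
        exact ⟨e, ⟨Nat.dvd_of_mul_dvd_mul_left hk.pos hd, right_ne_zero_of_mul hn⟩, rfl⟩
      · rintro ⟨e, ⟨he, -⟩, rfl⟩
        exact ⟨⟨mul_dvd_mul_left k he, hn⟩, dvd_mul_right k e⟩
    rw [hfilter, sum_image fun _ _ _ _ h => Nat.eq_of_mul_eq_mul_left hk.pos h,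
      Nat.mul_div_cancel_left m hk.pos, mul_sum]
    simp only [map_mul]
  · rw [mul_zero, filter_false_of_mem, sum_empty]
    exact fun d hd hkd => hkn (hkd.trans (Nat.dvd_of_mem_divisors hd))

theorem divisors_prime_mul_filter_not_dvd {p : ℕ} (hp : p.Prime) (m : ℕ) :
    {d ∈ (p * m).divisors | ¬p ∣ d} = {d ∈ m.divisors | ¬p ∣ d} := by
  ext d
  simp only [mem_filter, Nat.mem_divisors, mul_ne_zero_iff, and_congr_left_iff]
  intro hpd
  rw [((hp.coprime_iff_not_dvd.2 hpd).symm).dvd_mul_left, and_iff_right hp.ne_zero]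

theorem sum_divisors_prime_mul {R : Type*} [CommSemiring R] (χ : ℕ →* R) {p : ℕ} (hp : p.Prime)
    (m : ℕ) :
    ∑ d ∈ (p * m).divisors, χ d + χ p * (if p ∣ m then ∑ d ∈ (m / p).divisors, χ d else 0) =
      (1 + χ p) * ∑ d ∈ m.divisors, χ d := by
  rw [← sum_divisors_filter_dvd χ p m,
    ← sum_filter_add_sum_filter_not (p * m).divisors (p ∣ ·),
    sum_divisors_filter_dvd χ p (p * m), if_pos (dvd_mul_right p m),
    Nat.mul_div_cancel_left m hp.pos, divisors_prime_mul_filter_not_dvd hp, add_assoc,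
    add_comm (∑ d ∈ m.divisors with ¬p ∣ d, χ d), sum_filter_add_sum_filter_not]
  ring

theorem eq_mul_sum_divisors_of_prime_mul {R : Type*} [CommRing R] (χ : ℕ →* R) {f : ℕ → R}
    (hf : ∀ p m : ℕ, p.Prime → m ≠ 0 →
      f (p * m) + χ p * (if p ∣ m then f (m / p) else 0) = (1 + χ p) * f m)
    {n : ℕ} (hn : n ≠ 0) : f n = f 1 * ∑ d ∈ n.divisors, χ d := by
  induction n using Nat.strong_induction_on with
  | _ n ih =>
    rcases eq_or_ne n 1 with rfl | h1
    · simp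
    obtain ⟨p, hp, m, rfl⟩ := Nat.exists_prime_and_dvd h1
    have hm : m ≠ 0 := right_ne_zero_of_mul hn
    have hmlt : m < p * m := lt_mul_of_one_lt_left hm.pos hp.one_lt
    have ih_div : (if p ∣ m then f (m / p) else 0) =
        f 1 * if p ∣ m then ∑ d ∈ (m / p).divisors, χ d else 0 := by
      split_ifs with hpm
      · exact ih _ ((Nat.div_le_self m p).trans_lt hmlt)
          (Nat.div_pos (Nat.le_of_dvd hm.pos hpm) hp.pos).ne'
      · rw [mul_zero]
    have hfm := hf p m hp hm
    rw [ih m hmlt hm, ih_div] at hfm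
    linear_combination hfm - f 1 * sum_divisors_prime_mul χ hp m

open QuadraticAlgebra

section QuadraticNorm

section CommRing

variable {R : Type*} [CommRing R] {a b : R}

theorem four_mul_norm (z : QuadraticAlgebra R a b) :
    4 * z.norm = z.trace ^ 2 - (b ^ 2 + 4 * a) * z.im ^ 2 := by
  rw [norm_def, trace_def]
  ring

theorem isLocalHom_norm : IsLocalHom (QuadraticAlgebra.norm (R := R) (a := a) (b := b)) :=
  ⟨fun _ => isUnit_iff_norm_isUnit.2⟩

theorem natCast_dvd_iff {n : ℕ} {z : QuadraticAlgebra R a b} :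
    (n : QuadraticAlgebra R a b) ∣ z ↔ (n : R) ∣ z.re ∧ (n : R) ∣ z.im := by
  rw [← algebraMap_dvd_iff]
  simp

theorem natCast_norm_eq_mul_star {π : QuadraticAlgebra R a b} {p : ℕ} (hπ : π.norm = p) :
    (p : QuadraticAlgebra R a b) = π * star π := by
  rw [← algebraMap_norm_eq_mul_star, hπ]
  simp

variable [LinearOrder R] [IsStrictOrderedRing R]

theorem norm_pos_of_ne_zero (hD : b ^ 2 + 4 * a < 0) {z : QuadraticAlgebra R a b} (hz : z ≠ 0) :
    0 < z.norm := by
  have h4 := four_mul_norm z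
  rcases eq_or_ne z.im 0 with him | him
  · have hre : z.re ≠ 0 := fun hre => hz (QuadraticAlgebra.ext hre him)
    have : 0 < z.re ^ 2 := by positivity
    rw [trace_def, him] at h4
    linarith
  · have : 0 < z.im ^ 2 := by positivity
    nlinarith [sq_nonneg z.trace]

theorem norm_nonneg_of_discr_neg (hD : b ^ 2 + 4 * a < 0) (z : QuadraticAlgebra R a b) :
    0 ≤ z.norm := by
  rcases eq_or_ne z 0 with rfl | hz
  · rw [QuadraticAlgebra.norm_zero]
  · exact (norm_pos_of_ne_zero hD hz).le

end CommRing

variable {a b : ℤ}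

theorem not_dvd_im_of_norm_eq_prime {p : ℕ} (hp : p.Prime) {π : QuadraticAlgebra ℤ a b}
    (hπ : π.norm = p) : ¬(p : ℤ) ∣ π.im := by
  have hpZ : Prime (p : ℤ) := Nat.prime_iff_prime_int.1 hp
  rintro ⟨v, hv⟩
  rw [norm_def] at hπ
  obtain ⟨u, hu⟩ : (p : ℤ) ∣ π.re := hpZ.dvd_of_dvd_pow (n := 2)
    ⟨1 - b * π.re * v + a * p * v ^ 2, by rw [hv] at hπ; linear_combination hπ⟩
  refine hpZ.not_isUnit (isUnit_iff_dvd_one.2 ⟨u ^ 2 + b * u * v - a * v ^ 2, ?_⟩)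
  refine mul_left_cancel₀ hpZ.ne_zero ?_
  rw [hu, hv] at hπ
  linear_combination -hπ

theorem dvd_star_iff_dvd_discr {p : ℕ} (hp : p.Prime) {π : QuadraticAlgebra ℤ a b}
    (hπ : π.norm = p) : π ∣ star π ↔ (p : ℤ) ∣ b ^ 2 + 4 * a := by
  have hpZ : Prime (p : ℤ) := Nat.prime_iff_prime_int.1 hp
  have h4 := four_mul_norm π
  rw [hπ] at h4
  rw [star_eq, dvd_sub_self_right]
  constructor
  · rintro ⟨w, hw⟩
    have hnorm : π.trace ^ 2 = p * w.norm := by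
      rw [← norm_algebraMap (a := a) (b := b), hw, map_mul, hπ]
    have : (p : ℤ) ∣ (b ^ 2 + 4 * a) * π.im ^ 2 := ⟨w.norm - 4, by linarith⟩
    exact (hpZ.dvd_or_dvd this).resolve_right
      (mt hpZ.dvd_of_dvd_pow (not_dvd_im_of_norm_eq_prime hp hπ))
  · rintro ⟨e, he⟩
    have htrace : (p : ℤ) ∣ π.trace := hpZ.dvd_of_dvd_pow (n := 2)
      ⟨4 + e * π.im ^ 2, by rw [he] at h4; linear_combination -h4⟩
    have hdvd : π ∣ (p : QuadraticAlgebra ℤ a b) :=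
      ⟨star π, natCast_norm_eq_mul_star hπ⟩
    have := map_dvd (algebraMap ℤ (QuadraticAlgebra ℤ a b)) htrace
    rw [map_natCast] at this
    exact hdvd.trans this

/-- The inert case: a polynomial `T ^ 2 - b * T - a` without roots modulo `p` makes the norm form
anisotropic modulo `p`. -/
theorem natCast_dvd_of_dvd_norm {p : ℕ} (hp : p.Prime)
    (hroot : ¬∃ t : ℤ, (p : ℤ) ∣ t ^ 2 - b * t - a) {z : QuadraticAlgebra ℤ a b}
    (hz : (p : ℤ) ∣ z.norm) : (p : QuadraticAlgebra ℤ a b) ∣ z := by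
  have hpZ : Prime (p : ℤ) := Nat.prime_iff_prime_int.1 hp
  obtain ⟨c, hc⟩ := hz
  rw [norm_def] at hc
  have him : (p : ℤ) ∣ z.im := by
    by_contra him
    obtain ⟨r, s, hrs⟩ := (Prime.coprime_iff_not_dvd hpZ).2 him
    refine hroot ⟨-(z.re * s), s ^ 2 * c + a * r * (r * p - 2) + b * z.re * s * r, ?_⟩
    linear_combination s ^ 2 * hc + (-(b * z.re * s) + a * (1 - r * p + s * z.im)) * hrs
  refine natCast_dvd_iff.2 ⟨hpZ.dvd_of_dvd_pow (n := 2) ?_, him⟩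
  obtain ⟨v, hv⟩ := him
  exact ⟨c - b * z.re * v + a * z.im * v, by rw [hv] at hc ⊢; linear_combination hc⟩

variable [DecompositionMonoid (QuadraticAlgebra ℤ a b)]

theorem prime_of_norm_eq_prime {p : ℕ} (hp : p.Prime) {π : QuadraticAlgebra ℤ a b}
    (hπ : π.norm = p) : Prime π := by
  have := isLocalHom_norm (a := a) (b := b)
  exact (Irreducible.of_map (f := QuadraticAlgebra.norm)
    (hπ ▸ (Nat.prime_iff_prime_int.1 hp).irreducible)).prime

theorem dvd_or_star_dvd_of_dvd_norm {p : ℕ} (hp : p.Prime) {π z : QuadraticAlgebra ℤ a b}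
    (hπ : π.norm = p) (hz : (p : ℤ) ∣ z.norm) : π ∣ z ∨ star π ∣ z := by
  have hdvd : π ∣ z * star z := by
    have := map_dvd (algebraMap ℤ (QuadraticAlgebra ℤ a b)) hz
    rw [map_natCast, natCast_norm_eq_mul_star hπ, algebraMap_norm_eq_mul_star] at this
    exact dvd_of_mul_right_dvd this
  refine ((prime_of_norm_eq_prime hp hπ).dvd_or_dvd hdvd).imp_right fun h => ?_
  simpa only [starRingEnd_apply, star_star] using map_dvd (starRingEnd (QuadraticAlgebra ℤ a b)) h

theorem natCast_dvd_iff_dvd_and_star_dvd {p : ℕ} (hp : p.Prime) {π z : QuadraticAlgebra ℤ a b}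
    (hπ : π.norm = p) (hpD : ¬(p : ℤ) ∣ b ^ 2 + 4 * a) :
    (p : QuadraticAlgebra ℤ a b) ∣ z ↔ π ∣ z ∧ star π ∣ z := by
  rw [natCast_norm_eq_mul_star hπ]
  constructor
  · exact fun h => ⟨dvd_of_mul_right_dvd h, dvd_of_mul_left_dvd h⟩
  · rintro ⟨hd, w, rfl⟩
    rw [mul_comm π]
    exact mul_dvd_mul_left _ (((prime_of_norm_eq_prime hp hπ).dvd_or_dvd hd).resolve_left
      (mt (dvd_star_iff_dvd_discr hp hπ).1 hpD))

/-- A root `t` gives `p ∣ (ω - t) * star (ω - t)` while `p` divides neither factor, so `p` is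
reducible. -/
theorem exists_natAbs_norm_eq_prime {p : ℕ} (hp : p.Prime) {t : ℤ}
    (ht : (p : ℤ) ∣ t ^ 2 - b * t - a) :
    ∃ π : QuadraticAlgebra ℤ a b, π.norm.natAbs = p := by
  have natAbs_norm_eq_one_iff (z : QuadraticAlgebra ℤ a b) : z.norm.natAbs = 1 ↔ IsUnit z := by
    rw [isUnit_iff_norm_isUnit, Int.isUnit_iff_natAbs_eq]
  have hpZ : Prime (p : ℤ) := Nat.prime_iff_prime_int.1 hp
  have hunit : ¬IsUnit (p : QuadraticAlgebra ℤ a b) := by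
    rw [isUnit_iff_norm_isUnit, QuadraticAlgebra.norm_natCast, isUnit_pow_iff two_ne_zero]
    exact hpZ.not_isUnit
  have hirr : ¬Irreducible (p : QuadraticAlgebra ℤ a b) := fun h => by
    let z : QuadraticAlgebra ℤ a b := ⟨-t, 1⟩
    have hnorm : z.norm = t ^ 2 - b * t - a := by
      rw [norm_def]
      ring
    have hz : (p : QuadraticAlgebra ℤ a b) ∣ z * star z := by
      rwa [← algebraMap_norm_eq_mul_star, ← map_natCast (algebraMap ℤ (QuadraticAlgebra ℤ a b)),
        algebraMap_dvd_iff_dvd, hnorm]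
    have hp1 : ¬(p : ℤ) ∣ 1 := mt isUnit_iff_dvd_one.2 hpZ.not_isUnit
    rcases h.prime.dvd_or_dvd hz with h | h
    · exact hp1 (natCast_dvd_iff.1 h).2
    · exact hp1 (dvd_neg.1 (natCast_dvd_iff.1 h).2)
  rw [irreducible_iff] at hirr
  push Not at hirr
  obtain ⟨α, β, hαβ, hα, hβ⟩ := hirr hunit
  refine ⟨α, ((hp.mul_eq_prime_sq_iff (mt (natAbs_norm_eq_one_iff α).1 hα)
    (mt (natAbs_norm_eq_one_iff β).1 hβ)).1 ?_).1⟩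
  rw [← Int.natAbs_mul, ← map_mul, ← hαβ, QuadraticAlgebra.norm_natCast, Int.natAbs_pow,
    Int.natAbs_natCast]

end QuadraticNorm

section NormFiber

/-- The elements of norm `n` in the quadratic order `ℤ[ω]`, `ω² = a + bω`: the representations of
`n` by the principal form of discriminant `b² + 4a`. -/
def normFiber (a b n : ℤ) : Set (QuadraticAlgebra ℤ a b) := {z | z.norm = n}

variable {a b : ℤ}

theorem mem_normFiber {n : ℤ} {z : QuadraticAlgebra ℤ a b} :
    z ∈ normFiber a b n ↔ z.norm = n := Iff.rfl

theorem normFiber_finite (hD : b ^ 2 + 4 * a < 0) (n : ℤ) : (normFiber a b n).Finite := by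
  have hinj : Function.Injective fun z : QuadraticAlgebra ℤ a b => (z.trace, z.im) := by
    intro z w h
    simp only [trace_def, Prod.mk.injEq] at h
    ext <;> grind
  refine (((Set.finite_Icc (-(4 * n)) (4 * n)).prod (Set.finite_Icc (-(4 * n)) (4 * n))).preimage
    hinj.injOn).subset fun z hz => ?_
  have h4 := four_mul_norm z
  rw [mem_normFiber.1 hz] at h4
  have htrace : z.trace ^ 2 ≤ 4 * n := by nlinarith [sq_nonneg z.im]
  have him : z.im ^ 2 ≤ 4 * n := by nlinarith [sq_nonneg z.trace, sq_nonneg z.im]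
  have abs_le_sq (x : ℤ) : |x| ≤ x ^ 2 := sq_abs x ▸ Int.le_self_sq |x|
  exact ⟨abs_le.1 ((abs_le_sq _).trans htrace), abs_le.1 ((abs_le_sq _).trans him)⟩

theorem image_mul_normFiber {π : QuadraticAlgebra ℤ a b} (hπ : π.norm ≠ 0) (n : ℤ) :
    (π * ·) '' normFiber a b n = {z ∈ normFiber a b (π.norm * n) | π ∣ z} := by
  ext z
  constructor
  · rintro ⟨w, hw, rfl⟩
    refine ⟨?_, dvd_mul_right π w⟩
    rw [mem_normFiber, map_mul, mem_normFiber.1 hw]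
  · rintro ⟨hz, w, rfl⟩
    rw [mem_normFiber, map_mul] at hz
    exact ⟨w, mul_left_cancel₀ hπ hz, rfl⟩

theorem ncard_normFiber_mul_dvd {π : QuadraticAlgebra ℤ a b} (hπ : π.norm ≠ 0) (n : ℤ) :
    {z ∈ normFiber a b (π.norm * n) | π ∣ z}.ncard = (normFiber a b n).ncard := by
  have hreg : π ∈ nonZeroDivisors (QuadraticAlgebra ℤ a b) :=
    norm_mem_nonZeroDivisors_iff.1 (mem_nonZeroDivisors_of_ne_zero hπ)
  have hinj : Function.Injective fun z : QuadraticAlgebra ℤ a b => π * z :=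
    fun _ _ h => (mul_cancel_left_mem_nonZeroDivisors hreg).1 h
  rw [← image_mul_normFiber hπ, Set.ncard_image_of_injective _ hinj]

theorem ncard_normFiber_mul_natCast_dvd {p : ℕ} (hp : p ≠ 0) (m : ℕ) :
    {z ∈ normFiber a b ((p * m : ℕ) : ℤ) | (p : QuadraticAlgebra ℤ a b) ∣ z}.ncard =
      if p ∣ m then (normFiber a b ((m / p : ℕ) : ℤ)).ncard else 0 := by
  have hpZ : (p : ℤ) ≠ 0 := by exact_mod_cast hp
  have hnorm : (p : QuadraticAlgebra ℤ a b).norm = p ^ 2 := QuadraticAlgebra.norm_natCast p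
  split_ifs with hpm
  · obtain ⟨k, rfl⟩ := hpm
    have hcast : ((p * (p * k) : ℕ) : ℤ) = (p : QuadraticAlgebra ℤ a b).norm * (k : ℕ) := by
      rw [hnorm]
      push_cast
      ring
    rw [Nat.mul_div_cancel_left k hp.pos, hcast,
      ncard_normFiber_mul_dvd (hnorm ▸ pow_ne_zero 2 hpZ)]
  · suffices h : {z ∈ normFiber a b ((p * m : ℕ) : ℤ) | (p : QuadraticAlgebra ℤ a b) ∣ z} = ∅ by
      rw [h, Set.ncard_empty]
    refine Set.eq_empty_of_forall_notMem ?_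
    rintro z ⟨hz, w, rfl⟩
    rw [mem_normFiber, map_mul, hnorm, sq, mul_assoc, Nat.cast_mul] at hz
    exact hpm (Int.natCast_dvd_natCast.1 ⟨w.norm, (mul_left_cancel₀ hpZ hz).symm⟩)

variable [DecompositionMonoid (QuadraticAlgebra ℤ a b)]

theorem ncard_normFiber_ramified {p : ℕ} (hp : p.Prime) {π : QuadraticAlgebra ℤ a b}
    (hπ : π.norm = p) (hpD : (p : ℤ) ∣ b ^ 2 + 4 * a) (m : ℕ) :
    (normFiber a b ((p * m : ℕ) : ℤ)).ncard = (normFiber a b m).ncard := by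
  have hπ0 : π.norm ≠ 0 := by rw [hπ]; exact_mod_cast hp.ne_zero
  rw [← ncard_normFiber_mul_dvd hπ0 (m : ℤ), hπ, ← Nat.cast_mul]
  congr 1
  refine (Set.sep_eq_self_iff_mem_true.2 fun z hz => ?_).symm
  have hpz : (p : ℤ) ∣ z.norm := ⟨m, by rw [mem_normFiber.1 hz, Nat.cast_mul]⟩
  exact (dvd_or_star_dvd_of_dvd_norm hp hπ hpz).elim id
    ((dvd_star_iff_dvd_discr hp hπ).2 hpD).trans

theorem ncard_normFiber_split {p : ℕ} (hp : p.Prime) (hD : b ^ 2 + 4 * a < 0)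
    {π : QuadraticAlgebra ℤ a b} (hπ : π.norm = p) (hpD : ¬(p : ℤ) ∣ b ^ 2 + 4 * a) (m : ℕ) :
    (normFiber a b ((p * m : ℕ) : ℤ)).ncard +
        {z ∈ normFiber a b ((p * m : ℕ) : ℤ) | (p : QuadraticAlgebra ℤ a b) ∣ z}.ncard =
      2 * (normFiber a b m).ncard := by
  have hπ0 : π.norm ≠ 0 := by rw [hπ]; exact_mod_cast hp.ne_zero
  have hstar : (star π).norm = p := by rw [QuadraticAlgebra.norm_star, hπ]
  set F := normFiber a b ((p * m : ℕ) : ℤ) with hF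
  have hfin : F.Finite := normFiber_finite hD _
  have hcard : {z ∈ F | π ∣ z}.ncard = (normFiber a b m).ncard := by
    rw [← ncard_normFiber_mul_dvd hπ0 (m : ℤ), hπ, hF, Nat.cast_mul]
  have hcard_star : {z ∈ F | star π ∣ z}.ncard = (normFiber a b m).ncard := by
    rw [← ncard_normFiber_mul_dvd (hstar ▸ hπ ▸ hπ0) (m : ℤ), hstar, hF, Nat.cast_mul]
  have hunion : {z ∈ F | π ∣ z} ∪ {z ∈ F | star π ∣ z} = F := by
    rw [← Set.sep_or, Set.sep_eq_self_iff_mem_true]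
    intro z hz
    exact dvd_or_star_dvd_of_dvd_norm hp hπ ⟨m, by rw [mem_normFiber.1 hz, Nat.cast_mul]⟩
  have hinter : {z ∈ F | π ∣ z} ∩ {z ∈ F | star π ∣ z} =
      {z ∈ F | (p : QuadraticAlgebra ℤ a b) ∣ z} := by
    simp only [← Set.sep_and, natCast_dvd_iff_dvd_and_star_dvd hp hπ hpD]
  have := Set.ncard_union_add_ncard_inter {z ∈ F | π ∣ z} {z ∈ F | star π ∣ z}
    (hfin.sep _) (hfin.sep _)
  rwa [hunion, hinter, hcard, hcard_star, ← two_mul] at this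

end NormFiber

section Splitting

open Classical in
/-- The Kronecker symbol of the discriminant `b² + 4a` at a prime `p`, encoded by the splitting of
`T² - bT - a` modulo `p`, so that `p = 2` needs no separate treatment. -/
noncomputable def splittingSymbol (a b : ℤ) (p : ℕ) : ℤ :=
  if (p : ℤ) ∣ b ^ 2 + 4 * a then 0 else if ∃ t : ℤ, (p : ℤ) ∣ t ^ 2 - b * t - a then 1 else -1

variable {a b : ℤ}

theorem exists_root_iff_isSquare_discr {p : ℕ} [Fact p.Prime] (h2 : p ≠ 2) :
    (∃ t : ℤ, (p : ℤ) ∣ t ^ 2 - b * t - a) ↔ IsSquare ((b ^ 2 + 4 * a : ℤ) : ZMod p) := by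
  have : NeZero (2 : ZMod p) := ⟨Ring.two_ne_zero (by rwa [ZMod.ringChar_zmod_n])⟩
  constructor
  · rintro ⟨t, c, hc⟩
    refine ⟨((2 * t - b : ℤ) : ZMod p), ?_⟩
    rw [← Int.cast_mul, ← sub_eq_zero, ← Int.cast_sub, ZMod.intCast_zmod_eq_zero_iff_dvd]
    exact ⟨-4 * c, by linear_combination -4 * hc⟩
  · rintro ⟨s, hs⟩
    obtain ⟨x, hx⟩ := exists_quadratic_eq_zero (a := (1 : ZMod p)) (b := -(b : ZMod p))
      (c := -(a : ZMod p)) one_ne_zero ⟨s, by rw [discrim, ← hs]; push_cast; ring⟩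
    obtain ⟨t, rfl⟩ := ZMod.intCast_surjective x
    refine ⟨t, (ZMod.intCast_zmod_eq_zero_iff_dvd _ p).1 ?_⟩
    push_cast
    linear_combination hx

theorem splittingSymbol_eq_legendreSym {p : ℕ} [Fact p.Prime] (h2 : p ≠ 2) :
    splittingSymbol a b p = legendreSym p (b ^ 2 + 4 * a) := by
  have hdvd := ZMod.intCast_zmod_eq_zero_iff_dvd (b ^ 2 + 4 * a) p
  have hroot := exists_root_iff_isSquare_discr (a := a) (b := b) h2
  rw [splittingSymbol]
  split_ifs with h0 hsq
  · exact ((legendreSym.eq_zero_iff p _).2 (hdvd.2 h0)).symm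
  · exact ((legendreSym.eq_one_iff p (mt hdvd.1 h0)).2 (hroot.1 hsq)).symm
  · exact ((legendreSym.eq_neg_one_iff p).2 (mt hroot.2 hsq)).symm

theorem exists_root_of_dvd_discr {p : ℕ} (hp : p.Prime) (hpD : (p : ℤ) ∣ b ^ 2 + 4 * a) :
    ∃ t : ℤ, (p : ℤ) ∣ t ^ 2 - b * t - a := by
  have : Fact p.Prime := ⟨hp⟩
  rcases eq_or_ne p 2 with rfl | h2
  · obtain ⟨c, rfl⟩ : (2 : ℤ) ∣ b :=
      Int.prime_two.dvd_of_dvd_pow (n := 2) (by push_cast at hpD; omega)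
    obtain ⟨d, hd⟩ := Int.even_mul_pred_self a
    exact ⟨a, d - c * a, by push_cast; linear_combination hd⟩
  · rw [exists_root_iff_isSquare_discr h2, (ZMod.intCast_zmod_eq_zero_iff_dvd _ p).2 hpD]
    exact IsSquare.zero

variable [DecompositionMonoid (QuadraticAlgebra ℤ a b)]

theorem exists_norm_eq_prime {p : ℕ} (hp : p.Prime) (hD : b ^ 2 + 4 * a < 0)
    (hroot : ∃ t : ℤ, (p : ℤ) ∣ t ^ 2 - b * t - a) :
    ∃ π : QuadraticAlgebra ℤ a b, π.norm = p := by
  obtain ⟨t, ht⟩ := hroot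
  obtain ⟨π, hπ⟩ := exists_natAbs_norm_eq_prime (a := a) (b := b) hp ht
  exact ⟨π, by rw [← hπ, Int.natAbs_of_nonneg (norm_nonneg_of_discr_neg hD π)]⟩

theorem ncard_normFiber_prime_mul {p : ℕ} (hp : p.Prime) (hD : b ^ 2 + 4 * a < 0) (m : ℕ) :
    ((normFiber a b ((p * m : ℕ) : ℤ)).ncard : ℤ) + splittingSymbol a b p *
        {z ∈ normFiber a b ((p * m : ℕ) : ℤ) | (p : QuadraticAlgebra ℤ a b) ∣ z}.ncard =
      (1 + splittingSymbol a b p) * (normFiber a b m).ncard := by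
  rw [splittingSymbol]
  split_ifs with hpD hroot
  · obtain ⟨π, hπ⟩ := exists_norm_eq_prime hp hD (exists_root_of_dvd_discr hp hpD)
    rw [ncard_normFiber_ramified hp hπ hpD]
    ring
  · obtain ⟨π, hπ⟩ := exists_norm_eq_prime hp hD hroot
    have := ncard_normFiber_split hp hD hπ hpD m
    rw [one_mul]
    exact_mod_cast this
  · have hall : {z ∈ normFiber a b ((p * m : ℕ) : ℤ) | (p : QuadraticAlgebra ℤ a b) ∣ z} =
        normFiber a b ((p * m : ℕ) : ℤ) :=
      Set.sep_eq_self_iff_mem_true.2 fun z hz =>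
        natCast_dvd_of_dvd_norm hp hroot ⟨m, by rw [mem_normFiber.1 hz, Nat.cast_mul]⟩
    rw [hall]
    ring

theorem ncard_normFiber_eq_mul_sum_divisors (hD : b ^ 2 + 4 * a < 0) {χ : ℕ →* ℤ}
    (hχ : ∀ p : ℕ, p.Prime → χ p = splittingSymbol a b p) {n : ℕ} (hn : n ≠ 0) :
    ((normFiber a b n).ncard : ℤ) = (normFiber a b 1).ncard * ∑ d ∈ n.divisors, χ d := by
  refine eq_mul_sum_divisors_of_prime_mul χ
    (f := fun m => ((normFiber a b (m : ℤ)).ncard : ℤ)) (fun p m hp _ => ?_) hn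
  rw [hχ p hp, ← ncard_normFiber_prime_mul hp hD, ncard_normFiber_mul_natCast_dvd hp.ne_zero]
  push_cast
  rfl

end Splitting

section Euclidean

variable {a b : ℤ}

theorem two_mul_abs_bmod_le {n : ℕ} (hn : n ≠ 0) (x : ℤ) : 2 * |x.bmod n| ≤ n := by
  have hle := Int.le_bmod (x := x) hn.pos
  have hlt := Int.bmod_lt (x := x) hn.pos
  rcases abs_cases (x.bmod n) with ⟨h, -⟩ | ⟨h, -⟩ <;> rw [h] <;> omega

/-- Balanced remainders give imaginary part `|v| ≤ n / 2` and trace `|s| ≤ n`, so the norm is at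
most `(s² + 11 v²) / 4 < n²`. -/
theorem exists_norm_sub_natCast_mul_lt_sq (hD : -12 < b ^ 2 + 4 * a) {n : ℕ} (hn : n ≠ 0)
    (t : QuadraticAlgebra ℤ a b) :
    ∃ q : QuadraticAlgebra ℤ a b, (t - n * q).norm < n ^ 2 := by
  let v : ℤ := t.im.bmod n
  let s : ℤ := (2 * t.re + b * v).bmod (2 * n : ℕ)
  let q : QuadraticAlgebra ℤ a b := ⟨(2 * t.re + b * v).bdiv (2 * n : ℕ), t.im.bdiv n⟩
  have him : (t - n * q).im = v := by
    have hv : v = t.im - n * q.im := Int.bmod_eq_self_sub_mul_bdiv t.im n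
    rw [hv]
    simp
  have htrace : (t - n * q).trace = s := by
    have hs : s = 2 * t.re + b * v - (2 * n : ℕ) * q.re := Int.bmod_eq_self_sub_mul_bdiv _ _
    have hre : (t - n * q).re = t.re - n * q.re := by simp
    rw [trace_def, him, hre, hs]
    push_cast
    ring
  have hv2 : 4 * v ^ 2 ≤ n ^ 2 := by
    have := pow_le_pow_left₀ (by positivity) (two_mul_abs_bmod_le hn t.im) 2
    rwa [mul_pow, sq_abs] at this
  have hs2 : s ^ 2 ≤ n ^ 2 := by
    refine sq_le_sq.2 ?_
    have := two_mul_abs_bmod_le (mul_ne_zero two_ne_zero hn) (2 * t.re + b * v)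
    rw [Nat.abs_cast]
    push_cast at this
    linarith
  have hn2 : (0 : ℤ) < n ^ 2 := by positivity
  have h4 := four_mul_norm (t - (n : QuadraticAlgebra ℤ a b) * q)
  rw [him, htrace] at h4
  exact ⟨q, by nlinarith⟩

theorem exists_norm_sub_mul_lt (hD : b ^ 2 + 4 * a < 0) (hD' : -12 < b ^ 2 + 4 * a)
    (x : QuadraticAlgebra ℤ a b) {y : QuadraticAlgebra ℤ a b} (hy : y ≠ 0) :
    ∃ q : QuadraticAlgebra ℤ a b, (x - y * q).norm < y.norm := by
  have hpos := norm_pos_of_ne_zero hD hy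
  obtain ⟨n, hn⟩ := Int.eq_ofNat_of_zero_le hpos.le
  obtain ⟨q, hq⟩ := exists_norm_sub_natCast_mul_lt_sq hD' (n := n) (by omega) (star y * x)
  refine ⟨q, lt_of_mul_lt_mul_left ?_ hpos.le⟩
  calc y.norm * (x - y * q).norm
      = (star y * x - n * q).norm := by
        rw [natCast_norm_eq_mul_star hn, mul_comm y (star y), mul_assoc, ← mul_sub, map_mul,
          QuadraticAlgebra.norm_star]
    _ < n ^ 2 := hq
    _ = y.norm * y.norm := by rw [hn, sq]

open Classical in
/-- The norm-Euclidean structure on the imaginary quadratic orders of discriminant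
`-3`, `-4`, `-7`, `-8` and `-11`. -/
noncomputable abbrev normEuclideanDomain (hD : b ^ 2 + 4 * a < 0) (hD' : -12 < b ^ 2 + 4 * a) :
    EuclideanDomain (QuadraticAlgebra ℤ a b) where
  quotient x y := if hy : y = 0 then 0 else (exists_norm_sub_mul_lt hD hD' x hy).choose
  quotient_zero _ := dif_pos rfl
  remainder x y := x - y * if hy : y = 0 then 0 else (exists_norm_sub_mul_lt hD hD' x hy).choose
  quotient_mul_add_remainder_eq _ _ := add_sub_cancel _ _
  r x y := x.norm.natAbs < y.norm.natAbs
  r_wellFounded := (measure fun x : QuadraticAlgebra ℤ a b => x.norm.natAbs).wf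
  remainder_lt x y hy := by
    rw [dif_neg hy]
    exact Int.natAbs_lt_natAbs_of_nonneg_of_lt (norm_nonneg_of_discr_neg hD _)
      (exists_norm_sub_mul_lt hD hD' x hy).choose_spec
  mul_left_not_lt x y hy := by
    rw [map_mul, Int.natAbs_mul, not_lt]
    exact Nat.le_mul_of_pos_right _ (Int.natAbs_pos.2 (norm_pos_of_ne_zero hD hy).ne')

theorem decompositionMonoid_of_discr (hD : b ^ 2 + 4 * a < 0) (hD' : -12 < b ^ 2 + 4 * a) :
    DecompositionMonoid (QuadraticAlgebra ℤ a b) :=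
  letI := normEuclideanDomain hD hD'
  inferInstance

theorem normFiber_one (hD : b ^ 2 + 4 * a < -4) : normFiber a b 1 = {1, -1} := by
  ext z
  rw [mem_normFiber, Set.mem_insert_iff, Set.mem_singleton_iff]
  constructor
  · intro hz
    have h4 := four_mul_norm z
    rw [hz] at h4
    have him : z.im = 0 := by
      by_contra him
      have : 0 < z.im ^ 2 := by positivity
      nlinarith [sq_nonneg z.trace]
    have hre : z.re ^ 2 = 1 := by
      rw [norm_def, him] at hz
      linarith
    rcases sq_eq_sq_iff_eq_or_eq_neg.1 (hre.trans (one_pow 2).symm) with h | h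
    · exact .inl (QuadraticAlgebra.ext h him)
    · exact .inr (QuadraticAlgebra.ext h him)
  · rintro (rfl | rfl) <;> simp

theorem ncard_normFiber_one (hD : b ^ 2 + 4 * a < -4) : (normFiber a b 1).ncard = 2 := by
  rw [normFiber_one hD, Set.ncard_pair]
  intro h
  have := congrArg re h
  simp at this

end Euclidean

theorem legendreSym_neg_of_mod_four_eq_three {p q : ℕ} [Fact p.Prime] [Fact q.Prime] (hp : p ≠ 2)
    (hq : q % 4 = 3) : legendreSym p (-q) = legendreSym q p := by
  have hp2 : p % 2 = 1 := (Fact.out : p.Prime).eq_two_or_odd.resolve_left hp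
  have hq2 : q ≠ 2 := by omega
  have hq_half : Odd (q / 2) := ⟨q / 4, by omega⟩
  rw [← neg_one_mul, legendreSym.mul, legendreSym.at_neg_one hp, ZMod.χ₄_eq_neg_one_pow hp2,
    legendreSym.quadratic_reciprocity' hq2 hp, mul_comm (q / 2), pow_mul', hq_half.neg_one_pow,
    ← mul_assoc, ← mul_pow]
  norm_num

instance fact_prime_seven : Fact (Nat.Prime 7) := ⟨by norm_num⟩

theorem chiM7_eq_legendreSym (d : ℕ) : chiM7 d = legendreSym 7 d := by
  have hres : ∀ r < 7, chiM7 r = legendreSym 7 r := by decide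
  rw [legendreSym.mod, ← Int.natCast_mod, ← hres _ (Nat.mod_lt d (by norm_num))]
  simp only [chiM7, Nat.mod_mod]

/-- `chiM7` as a multiplicative character. -/
def chiM7Hom : ℕ →* ℤ where
  toFun := chiM7
  map_one' := rfl
  map_mul' c d := by
    simp only [chiM7_eq_legendreSym, Nat.cast_mul, legendreSym.mul]

theorem chiM7_eq_splittingSymbol {p : ℕ} (hp : p.Prime) : chiM7 p = splittingSymbol (-2) 1 p := by
  have : Fact p.Prime := ⟨hp⟩
  rcases eq_or_ne p 2 with rfl | h2
  · rw [splittingSymbol, if_neg (by norm_num), if_pos ⟨0, by norm_num⟩]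
    rfl
  · rw [splittingSymbol_eq_legendreSym h2, chiM7_eq_legendreSym]
    exact (legendreSym_neg_of_mod_four_eq_three h2 rfl).symm

theorem ncard_normFiber_neg_two_one {n : ℕ} (hn : n ≠ 0) :
    ((normFiber (-2) 1 n).ncard : ℤ) = 2 * ∑ d ∈ n.divisors, chiM7 d := by
  have := decompositionMonoid_of_discr (a := -2) (b := 1) (by norm_num) (by norm_num)
  rw [ncard_normFiber_eq_mul_sum_divisors (χ := chiM7Hom) (by norm_num)
    (fun p hp => chiM7_eq_splittingSymbol hp) hn, ncard_normFiber_one (by norm_num)]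
  rfl

theorem ncard_setOf_quadraticForm_eq (a b n : ℤ) :
    {p : ℤ × ℤ | p.1 ^ 2 + b * p.1 * p.2 - a * p.2 ^ 2 = n}.ncard = (normFiber a b n).ncard := by
  refine Set.ncard_congr' ((equivProd a b).symm.subtypeEquiv fun p => ?_)
  rw [Set.mem_ofPred_eq, mem_normFiber, norm_def]
  simp [sq, mul_assoc]

theorem odd_sq_add_mul_add_two_mul_sq_iff (x y : ℤ) :
    Odd (x ^ 2 + x * y + 2 * y ^ 2) ↔ x % 2 = 1 ∧ y % 2 = 0 := by
  rw [← Int.odd_iff, ← Int.even_iff]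
  simp only [parity_simps]
  grind

theorem sdiv_one (χ : ℕ → ℤ) (n : ℕ) : Sdiv χ n 1 = ∑ d ∈ n.divisors, χ d := by
  rw [Sdiv, if_pos (one_dvd n), Nat.div_one]

theorem sdiv_mul_mul_left (χ : ℕ → ℤ) {k : ℕ} (hk : 0 < k) (n l : ℕ) :
    Sdiv χ (k * n) (k * l) = Sdiv χ n l := by
  simp only [Sdiv, Nat.mul_dvd_mul_iff_left hk, Nat.mul_div_mul_left n l hk]

theorem sdiv_prime_mul (χ : ℕ →* ℤ) {p : ℕ} (hp : p.Prime) (m : ℕ) :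
    Sdiv χ (p * m) 1 + χ p * Sdiv χ (p * m) (p * p) = (1 + χ p) * Sdiv χ (p * m) p := by
  have hdiv : Sdiv χ (p * m) p = Sdiv χ m 1 := by
    rw [← sdiv_mul_mul_left χ hp.pos m 1, mul_one]
  rw [hdiv, sdiv_mul_mul_left χ hp.pos, sdiv_one, sdiv_one]
  exact sum_divisors_prime_mul χ hp m

theorem sdiv_chiM7_of_even {n : ℕ} (h : Even n) :
    Sdiv chiM7 n 1 + Sdiv chiM7 n 4 = 2 * Sdiv chiM7 n 2 := by
  obtain ⟨m, rfl⟩ := h.two_dvd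
  have hchi : chiM7Hom 2 = 1 := rfl
  have hsum := sdiv_prime_mul chiM7Hom Nat.prime_two m
  rw [hchi, one_mul] at hsum
  exact hsum

theorem rep_x2_xy_2y2_x1mod2_y0mod2 (n : ℕ) (hn : 0 < n) :
    ({p : ℤ × ℤ | p.1 ^ 2 + p.1 * p.2 + 2 * p.2 ^ 2 = (n : ℤ) ∧ p.1 % 2 = 1 ∧ p.2 % 2 = 0}.ncard : ℤ) =
      2 * Sdiv chiM7 n 1 - 4 * Sdiv chiM7 n 2 + 2 * Sdiv chiM7 n 4 := by
  simp only [← odd_sq_add_mul_add_two_mul_sq_iff]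
  rcases n.even_or_odd with heven | hodd
  · have hempty : {p : ℤ × ℤ | p.1 ^ 2 + p.1 * p.2 + 2 * p.2 ^ 2 = (n : ℤ) ∧
        Odd (p.1 ^ 2 + p.1 * p.2 + 2 * p.2 ^ 2)} = ∅ :=
      Set.eq_empty_of_forall_notMem fun p ⟨hp, hp_odd⟩ =>
        Int.not_odd_iff_even.2 ((Int.even_coe_nat n).2 heven) (hp ▸ hp_odd)
    rw [hempty, Set.ncard_empty]
    linear_combination -2 * sdiv_chiM7_of_even heven
  · have hform : {p : ℤ × ℤ | p.1 ^ 2 + p.1 * p.2 + 2 * p.2 ^ 2 = (n : ℤ) ∧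
        Odd (p.1 ^ 2 + p.1 * p.2 + 2 * p.2 ^ 2)} =
        {p : ℤ × ℤ | p.1 ^ 2 + 1 * p.1 * p.2 - -2 * p.2 ^ 2 = n} := by
      grind
    have hzero {k : ℕ} (hk : Even k) : Sdiv chiM7 n k = 0 :=
      if_neg fun hkn => Nat.not_even_iff_odd.2 hodd (hk.trans_dvd hkn)
    rw [hform, ncard_setOf_quadraticForm_eq, ncard_normFiber_neg_two_one hn.ne', ← sdiv_one,
      hzero even_two, hzero (k := 4) (by decide)]
    ring
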